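/- arXiv:1212.6756 — 2 statements merged into one kernel-verified Lean document; each statement's English description precedes it below -/
import Mathlib

section
/- For any forest G, π(G) ≤ 2: there exist two permutations of V(G) (obtained from preorder and postorder traversals of the trees) that together separate every pair of disjoint edges. -/
/-- A permutation `σ` separates two sets `A`, `B`: all of `A` comes before all
of `B`, or vice versa. -/
def SepPerm {V : Type*} {n : ℕ} (σ : V ≃ Fin n) (A B : Set V) : Prop :=
  (∀ a ∈ A, ∀ b ∈ B, σ a < σ b) ∨ (∀ a ∈ A, ∀ b ∈ B, σ b < σ a)

/-- A family of permutations is pairwise suitable for a graph `G` if every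
pair of disjoint edges is separated by some member of the family. -/
def PWSuitable {V : Type*} [Fintype V] (G : SimpleGraph V)
    {k : ℕ} (F : Fin k → (V ≃ Fin (Fintype.card V))) : Prop :=
  ∀ e ∈ G.edgeSet, ∀ f ∈ G.edgeSet, (∀ x, ¬(x ∈ e ∧ x ∈ f)) →
    ∃ i, SepPerm (F i) {x | x ∈ e} {x | x ∈ f}

/-- The separation dimension of a graph: the minimum size of a pairwise
suitable family of permutations of the vertex set. -/
noncomputable def sepDim {V : Type*} [Fintype V] (G : SimpleGraph V) : ℕ :=
  sInf {k : ℕ | ∃ F : Fin k → (V ≃ Fin (Fintype.card V)), PWSuitable G F}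

/-!
Build the forest vertex by vertex so that each new vertex has at most one neighbour among the
earlier ones, its parent. Insert it immediately after its parent in a first order (anywhere if it
has no parent), and before all earlier vertices in a second order. For a tree the first order is a
preorder traversal, and the second lists children before parents; if the tree is built depth first,
the second is the postorder traversal. Whatever lies between a parent and its child in the first
order was inserted after the child, hence precedes the child in the second order. This property
alone forces the two orders to separate every pair of disjoint edges.
-/

theorem SepPerm.symm {V : Type*} {n : ℕ} {σ : V ≃ Fin n} {A B : Set V} (h : SepPerm σ A B) :
    SepPerm σ B A :=
  (Or.symm h).imp (fun h b hb a ha ↦ h a ha b hb) fun h b hb a ha ↦ h a ha b hb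

theorem sepPerm_of_forall_le_of_forall_ge {V : Type*} {n : ℕ} {σ : V ≃ Fin n} {A B : Set V}
    {a b : V} (hab : σ a < σ b) (hA : ∀ x ∈ A, σ x ≤ σ a) (hB : ∀ x ∈ B, σ b ≤ σ x) :
    SepPerm σ A B :=
  .inl fun x hx y hy ↦ (hA x hx).trans_lt (hab.trans_le (hB y hy))

theorem exists_equiv_fin_lt_iff_lt {V α : Type*} [Fintype V] [LinearOrder α] {f : V → α}
    (hf : Function.Injective f) :
    ∃ σ : V ≃ Fin (Fintype.card V), ∀ a b, σ a < σ b ↔ f a < f b := by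
  let _ : LinearOrder V := LinearOrder.lift' f hf
  exact ⟨(Fintype.orderIsoFinOfCardEq V rfl).symm.toEquiv,
    fun _ _ ↦ (Fintype.orderIsoFinOfCardEq V rfl).symm.lt_iff_lt⟩

theorem injective_of_injOn_compl_singleton {V α : Type*} {f : V → α} {v : V}
    (hf : Set.InjOn f {v}ᶜ) (hv : ∀ u ≠ v, f u ≠ f v) : Function.Injective f := by
  have huniv : insert v ({v}ᶜ : Set V) = Set.univ := by
    rw [Set.insert_eq, Set.union_compl_self]
  rw [← Set.injOn_univ, ← huniv, Set.injOn_insert (by simp)]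
  exact ⟨hf, by rintro ⟨u, hu, huv⟩; exact hv u hu huv⟩

theorem exists_subsingleton_neighborSet_of_isAcyclic {V : Type*} [Nonempty V] {G : SimpleGraph V}
    [Finite G.edgeSet] (hG : G.IsAcyclic) : ∃ v, (G.neighborSet v).Subsingleton := by
  obtain ⟨u, v, p, hp, hmax⟩ := SimpleGraph.Walk.exists_isPath_forall_isPath_length_le_length G
  have eq_snd : ∀ w, G.Adj u w → w = p.snd := fun w huw ↦ by
    refine hG.eq_snd_of_adj_start hp huw (by_contra fun hw ↦ ?_)
    have hle := hmax _ _ _ (hp.cons (h := huw.symm) hw)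
    rw [SimpleGraph.Walk.length_cons] at hle
    lia
  exact ⟨u, fun x hx y hy ↦ (eq_snd x hx).trans (eq_snd y hy).symm⟩

/-- An abstraction of the preorder and the postorder traversal of a rooted forest, given by ranking
functions. The rooting is encoded by `post`: the child on an edge is the endpoint of smaller
`post`-rank. -/
structure IsPrePostOrder {V α β : Type*} [LinearOrder α] [LinearOrder β] (G : SimpleGraph V)
    (pre : V → α) (post : V → β) : Prop where
  pre_injective : Function.Injective pre
  post_injective : Function.Injective post
  pre_lt_of_adj {x y : V} : G.Adj x y → post x < post y → pre y < pre x
  post_lt_of_between {x y w : V} : G.Adj x y → post x < post y → pre y < pre w → pre w < pre x →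
    post w < post x

namespace IsPrePostOrder

variable {V : Type*} {G : SimpleGraph V}

section Order

variable {α β γ δ : Type*} [LinearOrder α] [LinearOrder β] [LinearOrder γ] [LinearOrder δ]
  {pre : V → α} {post : V → β}

theorem of_lt_iff_lt {pre' : V → γ} {post' : V → δ} (h : IsPrePostOrder G pre post)
    (hpre : ∀ a b, pre' a < pre' b ↔ pre a < pre b)
    (hpost : ∀ a b, post' a < post' b ↔ post a < post b) : IsPrePostOrder G pre' post' where
  pre_injective a b hab := h.pre_injective <| le_antisymm
    (not_lt.mp ((hpre b a).not.mp hab.not_gt)) (not_lt.mp ((hpre a b).not.mp hab.not_lt))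
  post_injective a b hab := h.post_injective <| le_antisymm
    (not_lt.mp ((hpost b a).not.mp hab.not_gt)) (not_lt.mp ((hpost a b).not.mp hab.not_lt))
  pre_lt_of_adj := by
    simp only [hpre, hpost]
    exact h.pre_lt_of_adj
  post_lt_of_between := by
    simp only [hpre, hpost]
    exact h.post_lt_of_between

theorem exists_eq_mk_and_lt_of_mem_edgeSet (h : IsPrePostOrder G pre post) {e : Sym2 V}
    (he : e ∈ G.edgeSet) : ∃ x y, e = s(x, y) ∧ G.Adj x y ∧ post x < post y := by
  induction e with
  | h x y =>
    rcases lt_or_gt_of_ne (h.post_injective.ne (G.ne_of_adj he)) with hlt | hlt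
    · exact ⟨x, y, rfl, he, hlt⟩
    · exact ⟨y, x, Sym2.eq_swap, he.symm, hlt⟩

theorem pre_lt_or_pre_lt_or_post_lt (h : IsPrePostOrder G pre post) {x y x' y' : V}
    (hxy : G.Adj x y) (hlt : post x < post y) (hxy' : G.Adj x' y') (hlt' : post x' < post y')
    (hxx' : post x < post x') (hyx' : y ≠ x') (hyy' : y ≠ y') :
    pre x < pre y' ∨ pre x' < pre y ∨ post y < post x' := by
  by_contra! ⟨hy'x, hyx, hx'y⟩
  have hy'x : pre y' < pre x :=
    hy'x.lt_of_ne (h.pre_injective.ne (by rintro rfl; exact lt_asymm hxx' hlt'))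
  have hyx : pre y < pre x' := hyx.lt_of_ne (h.pre_injective.ne hyx')
  rcases lt_or_gt_of_ne (h.pre_injective.ne hyy') with hy | hy
  · exact (h.post_lt_of_between hxy hlt hy hy'x).not_gt (hxx'.trans hlt')
  · exact (h.post_lt_of_between hxy' hlt' hy hyx).not_ge hx'y

end Order

-- The factor 2 makes room for `v` immediately after its neighbour.
theorem of_induce_compl_singleton {v : V} {k : ℕ} {pre post : ({v}ᶜ : Set V) → ℕ}
    {pre' post' : V → ℕ} (h : IsPrePostOrder (G.induce {v}ᶜ) pre post)
    (hk : ∀ u : ({v}ᶜ : Set V), G.Adj v u → pre u = k)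
    (hpre_v : pre' v = 2 * k + 1) (hpre : ∀ u : ({v}ᶜ : Set V), pre' u = 2 * pre u)
    (hpost_v : post' v = 0) (hpost : ∀ u : ({v}ᶜ : Set V), post' u = post u + 1) :
    IsPrePostOrder G pre' post' := by
  have eq_or_coe (x : V) : x = v ∨ ∃ u : ({v}ᶜ : Set V), u = x :=
    (eq_or_ne x v).imp_right fun hx ↦ ⟨⟨x, hx⟩, rfl⟩
  have pre_lt (u w : ({v}ᶜ : Set V)) : pre' u < pre' w ↔ pre u < pre w := by
    rw [hpre, hpre]
    lia
  have post_lt (u w : ({v}ᶜ : Set V)) : post' u < post' w ↔ post u < post w := by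
    rw [hpost, hpost]
    lia
  have not_post_lt (x : V) : ¬post' x < post' v := by simp [hpost_v]
  have pre_injOn : Set.InjOn pre' {v}ᶜ := Set.injOn_iff_injective.mpr fun u w huw ↦
    h.pre_injective <| Nat.mul_left_cancel two_pos <| by
      simpa only [Set.domRestrict_apply, hpre] using huw
  have post_injOn : Set.InjOn post' {v}ᶜ := Set.injOn_iff_injective.mpr fun u w huw ↦
    h.post_injective <| Nat.succ_injective <| by
      simpa only [Set.domRestrict_apply, hpost] using huw
  refine ⟨injective_of_injOn_compl_singleton pre_injOn fun u hu ↦ ?_,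
    injective_of_injOn_compl_singleton post_injOn fun u hu ↦ ?_,
    fun {x y} hxy hlt ↦ ?_, fun {x y w} hxy hlt hyw hwx ↦ ?_⟩
  · rw [hpre ⟨u, hu⟩, hpre_v]
    lia
  · simp [hpost ⟨u, hu⟩, hpost_v]
  · obtain rfl | ⟨y, rfl⟩ := eq_or_coe y
    · exact absurd hlt (not_post_lt x)
    obtain rfl | ⟨x, rfl⟩ := eq_or_coe x
    · rw [hpre, hpre_v, hk y hxy]
      lia
    · exact (pre_lt _ _).mpr (h.pre_lt_of_adj hxy ((post_lt _ _).mp hlt))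
  · obtain rfl | ⟨y, rfl⟩ := eq_or_coe y
    · exact absurd hlt (not_post_lt x)
    obtain rfl | ⟨w, rfl⟩ := eq_or_coe w
    · obtain rfl | ⟨x, rfl⟩ := eq_or_coe x
      · exact absurd hwx (lt_irrefl _)
      · simp [hpost_v, hpost]
    obtain rfl | ⟨x, rfl⟩ := eq_or_coe x
    · rw [hpre, hpre, hk y hxy] at hyw
      rw [hpre, hpre_v] at hwx
      lia
    · exact (post_lt _ _).mpr (h.post_lt_of_between hxy ((post_lt _ _).mp hlt)
        ((pre_lt _ _).mp hyw) ((pre_lt _ _).mp hwx))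

theorem exists_of_induce_compl_singleton {v : V} (hv : (G.neighborSet v).Subsingleton)
    {pre post : ({v}ᶜ : Set V) → ℕ} (h : IsPrePostOrder (G.induce {v}ᶜ) pre post) :
    ∃ pre' post' : V → ℕ, IsPrePostOrder G pre' post' := by
  classical
  obtain ⟨k, hk⟩ : ∃ k, ∀ u : ({v}ᶜ : Set V), G.Adj v u → pre u = k := by
    by_cases hu : ∃ u : ({v}ᶜ : Set V), G.Adj v u
    · obtain ⟨u, hu⟩ := hu
      exact ⟨pre u, fun w hw ↦ congrArg pre (Subtype.ext (hv hw hu))⟩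
    · exact ⟨0, fun w hw ↦ (hu ⟨w, hw⟩).elim⟩
  exact ⟨fun x ↦ if hx : x = v then 2 * k + 1 else 2 * pre ⟨x, hx⟩,
    fun x ↦ if hx : x = v then 0 else post ⟨x, hx⟩ + 1,
    h.of_induce_compl_singleton hk (dif_pos rfl) (fun u ↦ dif_neg u.2) (dif_pos rfl)
      (fun u ↦ dif_neg u.2)⟩

theorem sepPerm_or_sepPerm_of_lt {m n : ℕ} {σ : V ≃ Fin m} {τ : V ≃ Fin n}
    (h : IsPrePostOrder G σ τ) {x y x' y' : V} (hxy : G.Adj x y) (hlt : τ x < τ y)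
    (hxy' : G.Adj x' y') (hlt' : τ x' < τ y') (hxx' : τ x < τ x') (hyx' : y ≠ x') (hyy' : y ≠ y') :
    SepPerm σ {z | z ∈ s(x, y)} {z | z ∈ s(x', y')} ∨
      SepPerm τ {z | z ∈ s(x, y)} {z | z ∈ s(x', y')} := by
  have hσ : σ y ≤ σ x := (h.pre_lt_of_adj hxy hlt).le
  have hσ' : σ y' ≤ σ x' := (h.pre_lt_of_adj hxy' hlt').le
  rcases h.pre_lt_or_pre_lt_or_post_lt hxy hlt hxy' hlt' hxx' hyx' hyy' with hsep | hsep | hsep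
  · exact .inl (sepPerm_of_forall_le_of_forall_ge hsep (by simpa using hσ) (by simpa using hσ'))
  · refine .inl (SepPerm.symm ?_)
    exact sepPerm_of_forall_le_of_forall_ge hsep (by simpa using hσ') (by simpa using hσ)
  · refine .inr (sepPerm_of_forall_le_of_forall_ge hsep ?_ ?_)
    · simpa using hlt.le
    · simpa using hlt'.le

theorem sepPerm_or_sepPerm {m n : ℕ} {σ : V ≃ Fin m} {τ : V ≃ Fin n} (h : IsPrePostOrder G σ τ)
    {e f : Sym2 V} (he : e ∈ G.edgeSet) (hf : f ∈ G.edgeSet) (hef : ∀ x, ¬(x ∈ e ∧ x ∈ f)) :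
    SepPerm σ {x | x ∈ e} {x | x ∈ f} ∨ SepPerm τ {x | x ∈ e} {x | x ∈ f} := by
  obtain ⟨x, y, rfl, hxy, hlt⟩ := h.exists_eq_mk_and_lt_of_mem_edgeSet he
  obtain ⟨x', y', rfl, hxy', hlt'⟩ := h.exists_eq_mk_and_lt_of_mem_edgeSet hf
  have hne {u v : V} (hu : u ∈ s(x, y)) (hv : v ∈ s(x', y')) : u ≠ v := by
    rintro rfl
    exact hef u ⟨hu, hv⟩
  have hτ : τ x ≠ τ x' := τ.injective.ne (hne (Sym2.mem_mk_left x y) (Sym2.mem_mk_left x' y'))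
  rcases lt_or_gt_of_ne hτ with hxx' | hxx'
  · exact h.sepPerm_or_sepPerm_of_lt hxy hlt hxy' hlt' hxx' (hne (by simp) (by simp))
      (hne (by simp) (by simp))
  · exact (h.sepPerm_or_sepPerm_of_lt hxy' hlt' hxy hlt hxx' (hne (by simp) (by simp)).symm
      (hne (by simp) (by simp)).symm).imp SepPerm.symm SepPerm.symm

theorem pwSuitable [Fintype V] {σ τ : V ≃ Fin (Fintype.card V)} (h : IsPrePostOrder G σ τ) :
    PWSuitable G ![σ, τ] := fun _ he _ hf hef ↦
  (h.sepPerm_or_sepPerm he hf hef).elim (⟨0, ·⟩) (⟨1, ·⟩)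

end IsPrePostOrder

theorem exists_isPrePostOrder_of_isAcyclic {V : Type*} [Finite V] {G : SimpleGraph V}
    (hG : G.IsAcyclic) :
    ∃ pre post : V → ℕ, IsPrePostOrder G pre post := by
  induction hn : Nat.card V generalizing V with
  | zero =>
    have := Finite.card_eq_zero_iff.mp hn
    exact ⟨isEmptyElim, isEmptyElim, ⟨fun x ↦ isEmptyElim x, fun x ↦ isEmptyElim x,
      fun {x} ↦ isEmptyElim x, fun {x} ↦ isEmptyElim x⟩⟩
  | succ n ih =>
    have : Nonempty V := (Nat.card_pos_iff.mp (by lia)).1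
    obtain ⟨v, hv⟩ := exists_subsingleton_neighborSet_of_isAcyclic hG
    have hcard : Nat.card ({v}ᶜ : Set V) = n := by
      rw [Nat.card_coe_set_eq, Set.ncard_compl, Set.ncard_singleton, hn, Nat.add_sub_cancel]
    obtain ⟨pre, post, h⟩ := ih (hG.induce {v}ᶜ) hcard
    exact h.exists_of_induce_compl_singleton hv

/-- For any forest `G`, `π(G) ≤ 2`. -/
theorem stmt10 {V : Type*} [Fintype V] [DecidableEq V] (G : SimpleGraph V)
    (hG : G.IsAcyclic) : sepDim G ≤ 2 := by
  obtain ⟨pre, post, h⟩ := exists_isPrePostOrder_of_isAcyclic hG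
  obtain ⟨σ, hσ⟩ := exists_equiv_fin_lt_iff_lt h.pre_injective
  obtain ⟨τ, hτ⟩ := exists_equiv_fin_lt_iff_lt h.post_injective
  exact Nat.sInf_le ⟨![σ, τ], (h.of_lt_iff_lt hσ hτ).pwSuitable⟩
end

section
/- If the star chromatic number of G is χₛ, then π(G) ≤ χₛ + 13.68·log₂ χₛ; if the acyclic chromatic number is χₐ, then π(G) ≤ 2χₐ + 13.68·log₂ χₐ. -/
/-- `F` is a star forest: every connected component is a star. -/
def IsStarForest {V : Type*} (F : SimpleGraph V) : Prop :=
  ¬ ∃ a b c d : V, F.Adj a b ∧ F.Adj b c ∧ F.Adj c d ∧ a ≠ c ∧ b ≠ d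

/-!
Two disjoint edges whose colours lie in a common pair `{i, j}` belong to the forest induced by two
colour classes. A star forest needs one order, which lists its components one after another, and a
forest needs two, obtained by inserting leaves. Pairs of colours with the same sum modulo `r` are
disjoint and share their orders, so `r` or `2 * r` orders handle all these edges.

For any other two disjoint edges, a random order of the colours places the colours of one edge
weakly below those of the other with probability at least `1 / 3`. There are at most
`2 / 3 * r ^ 4` pairs of colour pairs, so by the union bound `6.84 * log₂ r` orders of the colours
suffice. Refining each of them by a fixed order of the vertices and by its reverse breaks the ties.
-/

section Separation

variable {V ι α β : Type*} {A B : Set V}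

/-- The height function `f` places all of `A` strictly below all of `B`, or vice versa. Unlike the
permutations of `SepPerm`, height functions may have ties, which makes them easy to combine. -/
def Separates [LT α] (f : V → α) (A B : Set V) : Prop :=
  (∀ a ∈ A, ∀ b ∈ B, f a < f b) ∨ (∀ a ∈ A, ∀ b ∈ B, f b < f a)

/-- The height function `f` separates `A` from `B` up to ties. For a colouring, this is what an
ordering of the colours can say about two sets of vertices. -/
def WeaklySeparates [LE α] (f : V → α) (A B : Set V) : Prop :=
  (∀ a ∈ A, ∀ b ∈ B, f a ≤ f b) ∨ (∀ a ∈ A, ∀ b ∈ B, f b ≤ f a)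

/-- Every two disjoint edges of `G` are separated by a member of the family `g` of height functions:
the counterpart of `PWSuitable` that allows ties. -/
def SeparatesEdges [LT α] (G : SimpleGraph V) (g : ι → V → α) : Prop :=
  ∀ e ∈ G.edgeSet, ∀ f ∈ G.edgeSet, Disjoint (e : Set V) f → ∃ i, Separates (g i) (e : Set V) f

theorem Separates.of_lt_imp_lt [LT α] [LT β] {f : V → α} {g : V → β}
    (h : Separates f A B) (hfg : ∀ u v, f u < f v → g u < g v) : Separates g A B :=
  h.imp (fun h a ha b hb => hfg _ _ (h a ha b hb)) (fun h a ha b hb => hfg _ _ (h a ha b hb))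

theorem WeaklySeparates.symm [LE α] {f : V → α} (h : WeaklySeparates f A B) :
    WeaklySeparates f B A :=
  Or.symm <| h.imp (fun h b hb a ha => h a ha b hb) (fun h b hb a ha => h a ha b hb)

open Classical in
theorem separatesEdges_indicator (G : SimpleGraph V) :
    SeparatesEdges G fun (e : Sym2 V) v => if v ∈ e then 0 else 1 := by
  intro e _ f _ hef
  refine ⟨e, Or.inl fun a ha b hb => ?_⟩
  have hbe : b ∉ e := Set.disjoint_right.1 hef hb
  simp [SetLike.mem_coe.1 ha, hbe]

variable [Fintype V] [LinearOrder α]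

theorem exists_equiv_fin_lt_of_lt (f : V → α) :
    ∃ σ : V ≃ Fin (Fintype.card V), ∀ u v, f u < f v → σ u < σ v := by
  let e := Fintype.equivFin V
  refine ⟨e.trans (Tuple.sort (f ∘ e.symm)).symm, fun u v huv => lt_of_not_ge fun hvu => ?_⟩
  exact huv.not_ge (by simpa using Tuple.monotone_sort (f ∘ e.symm) hvu)

variable {G : SimpleGraph V}

theorem SeparatesEdges.exists_pwSuitable [Fintype ι] {g : ι → V → α} (hg : SeparatesEdges G g) :
    ∃ F : Fin (Fintype.card ι) → (V ≃ Fin (Fintype.card V)), PWSuitable G F := by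
  choose σ hσ using fun i => exists_equiv_fin_lt_of_lt (g i)
  refine ⟨fun j => σ ((Fintype.equivFin ι).symm j), fun e he f hf hef => ?_⟩
  obtain ⟨i, hi⟩ := hg e he f hf (Set.disjoint_left.2 fun x hxe hxf => hef x ⟨hxe, hxf⟩)
  exact ⟨Fintype.equivFin ι i, by simpa [SepPerm, Separates] using hi.of_lt_imp_lt (hσ i)⟩

theorem PWSuitable.separatesEdges {k : ℕ} {F : Fin k → (V ≃ Fin (Fintype.card V))}
    (hF : PWSuitable G F) : SeparatesEdges G fun i v => F i v :=
  fun e he f hf hef => hF e he f hf fun _ hx => Set.disjoint_left.1 hef hx.1 hx.2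

theorem SeparatesEdges.sepDim_le_card [Fintype ι] {g : ι → V → α} (hg : SeparatesEdges G g) :
    sepDim G ≤ Fintype.card ι :=
  Nat.sInf_le hg.exists_pwSuitable

theorem sepDim_le_iff {t : ℕ} : sepDim G ≤ t ↔ ∃ g : Fin t → V → ℕ, SeparatesEdges G g := by
  refine ⟨fun ht => ?_, fun ⟨g, hg⟩ => by simpa using hg.sepDim_le_card⟩
  classical
  obtain ⟨F, hF⟩ : ∃ F : Fin (sepDim G) → (V ≃ Fin (Fintype.card V)), PWSuitable G F :=
    Nat.sInf_mem (s := {k | ∃ F : Fin k → (V ≃ Fin (Fintype.card V)), PWSuitable G F})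
      ⟨_, (separatesEdges_indicator G).exists_pwSuitable⟩
  refine ⟨fun i v => if hi : (i : ℕ) < sepDim G then F ⟨i, hi⟩ v else 0, fun e he f hf hef => ?_⟩
  obtain ⟨i, hi⟩ := hF.separatesEdges e he f hf hef
  refine ⟨Fin.castLE ht i, hi.of_lt_imp_lt fun u v huv => ?_⟩
  simpa [i.2] using huv

end Separation

section Covering

open Finset

/-- A union bound: each constraint fails at a uniformly random point with probability at most
`m / (m + 1)`. -/
theorem exists_fin_forall_exists_of_card_mul_lt {β Ω : Type*} [Fintype Ω] [Nonempty Ω]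
    (P : β → Ω → Prop) [∀ b, DecidablePred (P b)] (B : Finset β) (m k : ℕ)
    (hP : ∀ b ∈ B, Fintype.card Ω ≤ (m + 1) * #{ω | P b ω}) (hB : #B * m ^ k < (m + 1) ^ k) :
    ∃ F : Fin k → Ω, ∀ b ∈ B, ∃ i, P b (F i) := by
  classical
  by_contra! hF
  have hbad : ∀ b ∈ B, (m + 1) * #{ω | ¬ P b ω} ≤ m * Fintype.card Ω := fun b hb => by
    have hsplit := card_filter_add_card_filter_not (s := univ) (P b)
    rw [card_univ] at hsplit
    nlinarith [hP b hb]
  have hcover : (univ : Finset (Fin k → Ω)) ⊆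
      B.biUnion fun b => Fintype.piFinset fun _ => {ω | ¬ P b ω} := fun F _ => by
    simpa using hF F
  have hcard : Fintype.card Ω ^ k ≤ ∑ b ∈ B, #{ω | ¬ P b ω} ^ k := by
    simpa using (card_le_card hcover).trans card_biUnion_le
  have : (m + 1) ^ k * Fintype.card Ω ^ k < (m + 1) ^ k * Fintype.card Ω ^ k :=
    calc (m + 1) ^ k * Fintype.card Ω ^ k
      _ ≤ (m + 1) ^ k * ∑ b ∈ B, #{ω | ¬ P b ω} ^ k := Nat.mul_le_mul_left _ hcard
      _ = ∑ b ∈ B, ((m + 1) * #{ω | ¬ P b ω}) ^ k := by simp only [mul_sum, mul_pow]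
      _ ≤ ∑ _b ∈ B, (m * Fintype.card Ω) ^ k :=
        sum_le_sum fun _ hb => Nat.pow_le_pow_left (hbad _ hb) k
      _ = #B * m ^ k * Fintype.card Ω ^ k := by
        rw [sum_const, smul_eq_mul, mul_pow, mul_assoc]
      _ < (m + 1) ^ k * Fintype.card Ω ^ k :=
        Nat.mul_lt_mul_of_pos_right hB (pow_pos Fintype.card_pos k)
  exact this.false

theorem card_le_card_mul_card_filter_of_translates {Γ : Type*} [Group Γ] [Fintype Γ]
    (P : Γ → Prop) [DecidablePred P] (T : Finset Γ) (hT : ∀ σ, ∃ τ ∈ T, P (σ * τ)) :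
    Fintype.card Γ ≤ #T * #{σ | P σ} := by
  classical
  have hcover : (univ : Finset Γ) ⊆ T.biUnion fun τ => {σ | P (σ * τ)} := fun σ _ => by
    simpa using hT σ
  refine (card_le_card hcover).trans (card_biUnion_le_card_mul _ _ _ fun τ _ => ?_)
  exact (card_equiv (Equiv.mulRight τ) (by simp)).le

end Covering

section WeakSeparation

open Finset Equiv

variable {α β V : Type*}

/-- The pairs `e` and `f` are contained in a common pair, that is, they have at most two elements
altogether. -/
def SharePair (e f : Sym2 α) : Prop :=
  ∃ p : Sym2 α, e ≤ p ∧ f ≤ p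

theorem SharePair.symm {e f : Sym2 α} (h : SharePair e f) : SharePair f e :=
  h.imp fun _ => And.symm

theorem SharePair.map {e f : Sym2 α} (h : SharePair e f) (g : α → β) :
    SharePair (e.map g) (f.map g) := by
  obtain ⟨p, hep, hfp⟩ := h
  simp only [← SetLike.coe_subset_coe] at hep hfp
  refine ⟨p.map g, ?_, ?_⟩ <;> rw [← SetLike.coe_subset_coe, Sym2.coe_map, Sym2.coe_map]
  exacts [Set.image_mono hep, Set.image_mono hfp]

theorem sharePair_diag_left {i : α} {f : Sym2 α} (hi : i ∈ f) : SharePair s(i, i) f :=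
  ⟨f, by simpa [← SetLike.coe_subset_coe] using hi, le_rfl⟩

theorem exists_eq_mk_of_not_sharePair {e f : Sym2 α} (h : ¬ SharePair e f) :
    ∃ a b c d, e = s(a, b) ∧ f = s(c, d) ∧ a ≠ d ∧ b ≠ c ∧ b ≠ d ∧ (a ≠ b ∨ c ≠ d) := by
  obtain ⟨b, hbe, hbf⟩ := SetLike.not_le_iff_exists.1 fun hle : e ≤ f => h ⟨f, hle, le_rfl⟩
  obtain ⟨d, hdf, hde⟩ := SetLike.not_le_iff_exists.1 fun hle : f ≤ e => h ⟨e, le_rfl, hle⟩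
  obtain ⟨a, rfl⟩ := Sym2.mem_iff_exists.1 hbe
  obtain ⟨c, rfl⟩ := Sym2.mem_iff_exists.1 hdf
  simp only [Sym2.mem_iff, not_or] at hbf hde
  refine ⟨a, b, c, d, Sym2.eq_swap, Sym2.eq_swap, Ne.symm hde.2, hbf.2, hbf.1, ?_⟩
  by_contra! hdiag
  obtain ⟨rfl, rfl⟩ := hdiag
  exact h ⟨s(a, c), by simp [← SetLike.coe_subset_coe]⟩

theorem weaklySeparates_pair [LE β] {f : V → β} {a b c d : V} :
    WeaklySeparates f {a, b} {c, d} ↔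
      ((f a ≤ f c ∧ f a ≤ f d) ∧ f b ≤ f c ∧ f b ≤ f d) ∨
        ((f c ≤ f a ∧ f d ≤ f a) ∧ f c ≤ f b ∧ f d ≤ f b) := by
  simp [WeaklySeparates]

theorem separates_pair [LT β] {f : V → β} {a b c d : V} :
    Separates f {a, b} {c, d} ↔
      ((f a < f c ∧ f a < f d) ∧ f b < f c ∧ f b < f d) ∨
        ((f c < f a ∧ f d < f a) ∧ f c < f b ∧ f d < f b) := by
  simp [Separates]

-- Rotating `b`, `c`, `d` runs through the three ways of splitting the four values into two pairs.
theorem exists_rotation_weaklySeparates [LinearOrder β] {a b c d : α} (had : a ≠ d) (hbc : b ≠ c)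
    (hbd : b ≠ d) (hcd : c ≠ d) : ∃ τ : Perm α, ∀ σ : α → β,
      WeaklySeparates σ {a, b} {c, d} ∨ WeaklySeparates (σ ∘ τ) {a, b} {c, d} ∨
        WeaklySeparates (σ ∘ (τ ^ 2 : Perm α)) {a, b} {c, d} := by
  classical
  let τ : Perm α := swap b c * swap c d
  have hb : τ b = c := by simp [τ, swap_apply_of_ne_of_ne hbc hbd]
  have hc : τ c = d := by simp [τ, swap_apply_of_ne_of_ne hbd.symm hcd.symm]
  have hd : τ d = b := by simp [τ]
  refine ⟨τ, fun σ => ?_⟩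
  simp only [weaklySeparates_pair, Function.comp_apply, pow_two, Perm.mul_apply, hb, hc, hd]
  by_cases hab : a = b
  · subst hab
    rw [hb, hc]
    grind
  by_cases hac : a = c
  · subst hac
    rw [hc, hd]
    grind
  have ha : τ a = a := by
    simp [τ, swap_apply_of_ne_of_ne hac had, swap_apply_of_ne_of_ne hab hac]
  rw [ha, ha]
  grind

open Classical in
theorem card_perm_le_three_mul_card_weaklySeparates [LinearOrder α] [Fintype α] {e f : Sym2 α}
    (h : ¬ SharePair e f) :
    Fintype.card (Perm α) ≤ 3 * #{σ : Perm α | WeaklySeparates σ (e : Set α) f} := by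
  suffices ∃ τ : Perm α, ∀ σ : Perm α, WeaklySeparates σ (e : Set α) f ∨
      WeaklySeparates (σ ∘ τ) (e : Set α) f ∨
        WeaklySeparates (σ ∘ (τ ^ 2 : Perm α)) (e : Set α) f by
    obtain ⟨τ, hτ⟩ := this
    refine (card_le_card_mul_card_filter_of_translates _ {1, τ, τ ^ 2} fun σ => ?_).trans
      (Nat.mul_le_mul_right _ card_le_three)
    simpa using hτ σ
  obtain ⟨a, b, c, d, rfl, rfl, had, hbc, hbd, hab | hcd⟩ := exists_eq_mk_of_not_sharePair h <;>
    simp only [Sym2.coe_mk]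
  · obtain ⟨τ, hτ⟩ := exists_rotation_weaklySeparates (β := α) hbc.symm had.symm hbd.symm hab
    exact ⟨τ, fun σ => (hτ σ).imp .symm (.imp .symm .symm)⟩
  · obtain ⟨τ, hτ⟩ := exists_rotation_weaklySeparates (β := α) had hbc hbd hcd
    exact ⟨τ, fun σ => hτ σ⟩

open Classical in
theorem three_mul_card_not_sharePair_le [Fintype α] :
    3 * #{p : Sym2 α × Sym2 α | ¬ SharePair p.1 p.2} ≤ 2 * Fintype.card α ^ 4 := by
  have hsub : ({p | ¬ SharePair p.1 p.2} : Finset (Sym2 α × Sym2 α)) ⊆ univ.offDiag := by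
    intro p hp
    simp only [mem_filter_univ] at hp
    simp only [mem_offDiag, mem_univ, true_and]
    exact fun heq => hp ⟨p.1, le_rfl, heq.ge⟩
  have hcard := card_le_card hsub
  rw [offDiag_card, card_univ, Sym2.card] at hcard
  set n := Fintype.card α
  set N := (n + 1).choose 2
  have hN : N * 2 = (n + 1) * n := by simpa using (Nat.add_one_mul_choose_eq n 1).symm
  have hNN : 3 * (N * N) ≤ 2 * n ^ 4 + 3 * N := by
    zify at hN ⊢
    nlinarith [sq_nonneg ((n : ℤ) ^ 2 - n), sq_nonneg ((n : ℤ) ^ 2)]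
  omega

theorem exists_weaklySeparating_perms [Fintype α] [LinearOrder α] {k : ℕ}
    (hk : Fintype.card α ^ 4 * 2 ^ (k + 1) < 3 ^ (k + 1)) :
    ∃ F : Fin k → Perm α, ∀ e f : Sym2 α, ¬ SharePair e f →
      ∃ i, WeaklySeparates (F i) (e : Set α) f := by
  classical
  let B : Finset (Sym2 α × Sym2 α) := {p | ¬ SharePair p.1 p.2}
  obtain ⟨F, hF⟩ := exists_fin_forall_exists_of_card_mul_lt
    (fun p (σ : Perm α) => WeaklySeparates σ (p.1 : Set α) p.2) B 2 k
    (fun p hp => card_perm_le_three_mul_card_weaklySeparates (by simpa [B] using hp))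
    (by
      have h := Nat.mul_le_mul_right (2 ^ k) (three_mul_card_not_sharePair_le (α := α))
      simp only [pow_succ] at hk
      change #B * 2 ^ k < 3 ^ k
      linarith)
  exact ⟨F, fun e f hef => hF (e, f) (by simpa [B] using hef)⟩

-- Only one element of `e` and one of `f` can tie under `h`, because all ties occur at one value.
theorem WeaklySeparates.separates_lex {γ : Type*} [LinearOrder β] [LinearOrder γ] {h : V → β}
    {τ : V → γ} (hτ : Function.Injective τ) {e f : Sym2 V}
    (hef : WeaklySeparates h (e : Set V) f) (hdisj : Disjoint (e : Set V) f)
    (hspan : ¬ SharePair (e.map h) (f.map h)) :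
    Separates (fun v => toLex (h v, τ v)) (e : Set V) f ∨
      Separates (fun v => toLex (h v, OrderDual.toDual (τ v))) (e : Set V) f := by
  induction e with | _ a b
  induction f with | _ x y
  have hab : h a = h b → h a ≠ h x ∧ h a ≠ h y := fun heq => by
    rw [Sym2.map_mk, Sym2.map_mk, ← heq] at hspan
    simpa [Sym2.mem_iff] using mt sharePair_diag_left hspan
  have hxy : h x = h y → h x ≠ h a ∧ h x ≠ h b := fun heq => by
    rw [Sym2.map_mk, Sym2.map_mk, ← heq] at hspan
    simpa [Sym2.mem_iff] using fun hmem => hspan (sharePair_diag_left hmem).symm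
  obtain ⟨⟨hax, hbx⟩, hay, hby⟩ : (τ a ≠ τ x ∧ τ b ≠ τ x) ∧ τ a ≠ τ y ∧ τ b ≠ τ y := by
    simpa [hτ.eq_iff, eq_comm] using hdisj
  simp only [Sym2.coe_mk, weaklySeparates_pair, separates_pair, Prod.Lex.toLex_lt_toLex,
    OrderDual.toDual_lt_toDual] at hef ⊢
  clear hτ hdisj hspan
  rcases hef with hef | hef
  · refine Or.imp Or.inl Or.inl ?_
    grind
  · refine Or.imp Or.inr Or.inr ?_
    grind

end WeakSeparation

theorem exists_pow_lt_and_le_logb (r : ℕ) :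
    ∃ k : ℕ, r ^ 4 * 2 ^ (k + 1) < 3 ^ (k + 1) ∧ (2 * k : ℝ) ≤ 13.68 * Real.logb 2 r := by
  obtain rfl | hr := Nat.eq_zero_or_pos r
  · exact ⟨0, by norm_num⟩
  have hr1 : (1 : ℝ) ≤ r := by exact_mod_cast hr
  set L := Real.logb 2 r
  have hL : 0 ≤ L := Real.logb_nonneg one_lt_two hr1
  have hrL : (r : ℝ) = 2 ^ L := (Real.rpow_logb two_pos (by norm_num) (by linarith)).symm
  -- The constant is twice `6.84`, which is just above `4 * log 2 / log (3 / 2)`.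
  have hbase : (16 : ℝ) ≤ (3 / 2) ^ (6.84 : ℝ) := by
    refine le_of_pow_le_pow_left₀ (n := 25) (by norm_num) (by positivity) ?_
    rw [← Real.rpow_mul_natCast (by norm_num), show (6.84 : ℝ) * (25 : ℕ) = (171 : ℕ) by norm_num,
      Real.rpow_natCast]
    norm_num
  refine ⟨⌊6.84 * L⌋₊, ?_, ?_⟩
  · have hlt : (r : ℝ) ^ 4 < (3 / 2) ^ (⌊6.84 * L⌋₊ + 1) :=
      calc (r : ℝ) ^ 4
        _ = 16 ^ L := by
          rw [hrL, ← Real.rpow_mul_natCast two_pos.le, mul_comm, Real.rpow_natCast_mul two_pos.le]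
          norm_num
        _ ≤ ((3 / 2) ^ (6.84 : ℝ)) ^ L := Real.rpow_le_rpow (by norm_num) hbase hL
        _ = (3 / 2) ^ (6.84 * L) := (Real.rpow_mul (by norm_num) _ _).symm
        _ < (3 / 2) ^ ((⌊6.84 * L⌋₊ + 1 : ℕ) : ℝ) :=
          Real.rpow_lt_rpow_of_exponent_lt (by norm_num)
            (by exact_mod_cast Nat.lt_floor_add_one _)
        _ = (3 / 2) ^ (⌊6.84 * L⌋₊ + 1) := Real.rpow_natCast _ _
    rw [div_pow, lt_div_iff₀ (by positivity)] at hlt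
    exact_mod_cast hlt
  · have := Nat.floor_le (a := 6.84 * L) (by positivity)
    linarith

section Partition

variable {V : Type*} {G : SimpleGraph V} {r k t : ℕ}

theorem exists_separates_of_not_sharePair [Finite V] (c : V → Fin r)
    (hk : r ^ 4 * 2 ^ (k + 1) < 3 ^ (k + 1)) :
    ∃ g : Fin k ⊕ Fin k → V → ℕ, ∀ e f : Sym2 V, Disjoint (e : Set V) f →
      ¬ SharePair (e.map c) (f.map c) → ∃ i, Separates (g i) (e : Set V) f := by
  have := Fintype.ofFinite V
  obtain ⟨F, hF⟩ := exists_weaklySeparating_perms (α := Fin r) (k := k) (by simpa using hk)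
  let τ := Fintype.equivFin V
  choose A hA using fun i => exists_equiv_fin_lt_of_lt fun v => toLex (F i (c v), τ v)
  choose B hB using fun i =>
    exists_equiv_fin_lt_of_lt fun v => toLex (F i (c v), OrderDual.toDual (τ v))
  refine ⟨Sum.elim (fun i v => A i v) (fun i v => B i v), fun e f hef hspan => ?_⟩
  obtain ⟨i, hi⟩ := hF _ _ hspan
  have hweak : WeaklySeparates (F i ∘ c) (e : Set V) f := by
    simpa [WeaklySeparates] using hi
  have hspan' : ¬ SharePair (e.map (F i ∘ c)) (f.map (F i ∘ c)) := fun h => hspan <| by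
    simpa [Sym2.map_map, ← Function.comp_assoc] using h.map (F i).symm
  obtain h | h := hweak.separates_lex τ.injective hef hspan'
  · exact ⟨.inl i, h.of_lt_imp_lt (hA i)⟩
  · exact ⟨.inr i, h.of_lt_imp_lt (hB i)⟩

theorem exists_separates_of_sepDim_induce_le {s : Set V} [Fintype s]
    (h : sepDim (G.induce s) ≤ t) :
    ∃ g : Fin t → V → ℕ, ∀ e ∈ G.edgeSet, ∀ f ∈ G.edgeSet, (e : Set V) ⊆ s → (f : Set V) ⊆ s →
      Disjoint (e : Set V) f → ∃ i, Separates (g i) (e : Set V) f := by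
  classical
  obtain ⟨g, hg⟩ := sepDim_le_iff.1 h
  refine ⟨fun i v => if hv : v ∈ s then g i ⟨v, hv⟩ else 0, fun e he f hf hes hfs hef => ?_⟩
  induction e with | _ a b
  induction f with | _ x y
  simp only [Sym2.coe_mk, Set.pair_subset_iff] at hes hfs hef ⊢
  obtain ⟨i, hi⟩ := hg s(⟨a, hes.1⟩, ⟨b, hes.2⟩) he s(⟨x, hfs.1⟩, ⟨y, hfs.2⟩) hf
    (by simpa using hef)
  exact ⟨i, by simpa [separates_pair, hes, hfs] using hi⟩

-- The pairs of colours `{i, s - i}` with a given sum `s` are pairwise disjoint, so the orders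
-- obtained for them can be merged: the `r` sums need only `r * t` orders.
theorem exists_separates_of_sharePair [Fintype V] {c : V → Fin r}
    (h : ∀ i j, sepDim (G.induce {v | c v = i ∨ c v = j}) ≤ t) :
    ∃ g : Fin r × Fin t → V → ℕ, ∀ e ∈ G.edgeSet, ∀ f ∈ G.edgeSet, Disjoint (e : Set V) f →
      SharePair (e.map c) (f.map c) → ∃ i, Separates (g i) (e : Set V) f := by
  obtain _ | r := r
  · exact ⟨fun _ _ => 0, Sym2.ind fun a => (c a).elim0⟩
  have hblock (p : Sym2 (Fin (r + 1))) : ∃ g : Fin t → V → ℕ, ∀ e ∈ G.edgeSet, ∀ f ∈ G.edgeSet,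
      e.map c ≤ p → f.map c ≤ p → Disjoint (e : Set V) f →
        ∃ i, Separates (g i) (e : Set V) f := by
    induction p with | _ i j
    obtain ⟨g, hg⟩ := exists_separates_of_sepDim_induce_le (h i j)
    refine ⟨g, fun e he f hf hep hfp => hg e he f hf (fun v hv => ?_) fun v hv => ?_⟩
    · exact Sym2.mem_iff.1 (hep (Sym2.mem_map.2 ⟨v, hv, rfl⟩))
    · exact Sym2.mem_iff.1 (hfp (Sym2.mem_map.2 ⟨v, hv, rfl⟩))
  choose g hg using hblock
  refine ⟨fun q v => g s(c v, q.1 - c v) q.2 v, fun e he f hf hef ⟨p, hep, hfp⟩ => ?_⟩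
  induction p with | _ i j
  obtain ⟨m, hm⟩ := hg s(i, j) e he f hf hep hfp hef
  have hp (e : Sym2 V) (hep : e.map c ≤ s(i, j)) (v : V) (hv : v ∈ e) :
      s(c v, i + j - c v) = s(i, j) := by
    obtain hv | hv := Sym2.mem_iff.1 (hep (Sym2.mem_map.2 ⟨v, hv, rfl⟩))
    · simp [hv]
    · simp [hv, Sym2.eq_swap]
  refine ⟨(i + j, m), hm.imp (fun hm a ha b hb => ?_) fun hm a ha b hb => ?_⟩
  all_goals
    simp only [hp e hep a ha, hp f hfp b hb]
    exact hm a ha b hb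

theorem sepDim_le_two_mul_add_mul [Fintype V] {c : V → Fin r}
    (hk : r ^ 4 * 2 ^ (k + 1) < 3 ^ (k + 1))
    (h : ∀ i j, sepDim (G.induce {v | c v = i ∨ c v = j}) ≤ t) : sepDim G ≤ 2 * k + r * t := by
  obtain ⟨g₁, hg₁⟩ := exists_separates_of_not_sharePair c hk
  obtain ⟨g₂, hg₂⟩ := exists_separates_of_sharePair h
  have hg : SeparatesEdges G (Sum.elim g₁ g₂) := fun e he f hf hef => by
    by_cases hspan : SharePair (e.map c) (f.map c)
    · exact (hg₂ e he f hf hef hspan).imp' Sum.inr fun _ => id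
    · exact (hg₁ e f hef hspan).imp' Sum.inl fun _ => id
  simpa [two_mul] using hg.sepDim_le_card

theorem sepDim_le_mul_add_logb [Fintype V] (c : V → Fin r)
    (h : ∀ i j, sepDim (G.induce {v | c v = i ∨ c v = j}) ≤ t) :
    (sepDim G : ℝ) ≤ t * r + 13.68 * Real.logb 2 r := by
  obtain ⟨k, hk, hlog⟩ := exists_pow_lt_and_le_logb r
  have : (sepDim G : ℝ) ≤ 2 * k + r * t := by exact_mod_cast sepDim_le_two_mul_add_mul hk h
  linarith

end Partition

section Forest

variable {V : Type*} {G : SimpleGraph V}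

theorem exists_forall_adj_eq_of_isAcyclic [Finite V] [Nonempty V] (hG : G.IsAcyclic) :
    ∃ l p, ∀ x, G.Adj l x → x = p := by
  classical
  have := Fintype.ofFinite V
  obtain ⟨w⟩ := ‹Nonempty V›
  let C := G.connectedComponentMk w
  have mem {v x : V} (hv : v ∈ C.supp) (h : G.Adj v x) : x ∈ C.supp :=
    (C.mem_supp_congr_adj h).1 hv
  obtain hC | hC := subsingleton_or_nontrivial C
  · have hw : w ∈ C.supp := rfl
    exact ⟨w, w, fun x hx => congrArg Subtype.val
      (Subsingleton.elim (⟨x, mem hw hx⟩ : C) ⟨w, hw⟩)⟩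
  · obtain ⟨⟨l, hl⟩, hdeg⟩ :=
      (hG.isTree_connectedComponent C).exists_vert_degree_one_of_nontrivial
    obtain ⟨p, -, hp⟩ := SimpleGraph.degree_eq_one_iff_existsUnique_adj.1 hdeg
    exact ⟨l, p, fun x hx => congrArg Subtype.val (hp ⟨x, mem hl hx⟩ hx)⟩

theorem leaf_induction_of_isAcyclic [DecidableEq V] (hG : G.IsAcyclic) {P : Finset V → Prop}
    (empty : P ∅)
    (insert : ∀ s, ∀ l ∉ s, ∀ p, (∀ x ∈ s, G.Adj l x → x = p) → P s → P (insert l s))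
    (s : Finset V) : P s := by
  induction s using Finset.strongInduction with | H s ih
  obtain rfl | hs := s.eq_empty_or_nonempty
  · exact empty
  have := hs.coe_sort
  obtain ⟨⟨l, hl⟩, p, hp⟩ := exists_forall_adj_eq_of_isAcyclic (hG.induce (s : Set V))
  rw [← Finset.insert_erase hl]
  refine insert _ l (Finset.notMem_erase l s) p (fun x hx hlx => ?_)
    (ih _ (Finset.erase_ssubset hl))
  exact congrArg Subtype.val (hp ⟨x, Finset.mem_of_mem_erase hx⟩ hlx)

/-- The two orders that arise on the vertex set `s` of a forest by inserting leaf after leaf: each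
new leaf is placed directly above its neighbour in `g₁` and on top in `g₂`. -/
structure IsLeafLayout (G : SimpleGraph V) (s : Finset V) (g₁ g₂ : V → ℕ) : Prop where
  injOn : Set.InjOn g₁ s
  separates : ∀ v ∈ s, ∀ x ∈ s, ∀ y ∈ s, G.Adj x y → v ≠ x → v ≠ y →
    (g₁ v < g₁ x ∧ g₁ v < g₁ y) ∨ (g₁ x < g₁ v ∧ g₁ y < g₁ v) ∨ (g₂ x < g₂ v ∧ g₂ y < g₂ v)

open Function in
theorem IsLeafLayout.insert [DecidableEq V] {s : Finset V} {g₁ g₂ : V → ℕ} {l p : V}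
    (h : IsLeafLayout G s g₁ g₂) (hl : l ∉ s) (hp : ∀ x ∈ s, G.Adj l x → x = p) :
    IsLeafLayout G (insert l s) (update (fun v => 2 * g₁ v) l (2 * g₁ p + 1))
      (update g₂ l (s.sup g₂ + 1)) := by
  set g₁' := update (fun v => 2 * g₁ v) l (2 * g₁ p + 1)
  set g₂' := update g₂ l (s.sup g₂ + 1)
  have hl₁ : g₁' l = 2 * g₁ p + 1 := update_self ..
  have h₁ : ∀ v ∈ s, g₁' v = 2 * g₁ v := fun v hv => update_of_ne (ne_of_mem_of_not_mem hv hl) ..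
  have h₂ : ∀ v ∈ s, g₂' v = g₂ v := fun v hv => update_of_ne (ne_of_mem_of_not_mem hv hl) ..
  have htop : ∀ v ∈ s, g₂' v < g₂' l := fun v hv => by
    rw [h₂ v hv, show g₂' l = _ from update_self ..]
    exact Nat.lt_succ_of_le (Finset.le_sup hv)
  have hleaf : ∀ v ∈ s, ∀ x ∈ s, G.Adj l x → v ≠ x →
      (g₁' v < g₁' l ∧ g₁' v < g₁' x) ∨ (g₁' l < g₁' v ∧ g₁' x < g₁' v) := by
    intro v hv x hx hlx hvx
    obtain rfl := hp x hx hlx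
    have hne := h.injOn.ne hv hx hvx
    rw [hl₁, h₁ v hv, h₁ x hx]
    omega
  constructor
  · rw [Finset.coe_insert, Set.injOn_insert (by simpa using hl)]
    refine ⟨fun x hx y hy hxy => h.injOn hx hy ?_, fun ⟨x, hx, hxl⟩ => ?_⟩
    · rw [h₁ x hx, h₁ y hy] at hxy
      omega
    · rw [h₁ x hx, hl₁] at hxl
      omega
  · simp only [Finset.mem_insert]
    rintro v (rfl | hv) x (rfl | hx) y (rfl | hy) hxy hvx hvy
    case inl.inr.inr => exact .inr (.inr ⟨htop x hx, htop y hy⟩)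
    case inr.inl.inl => exact (G.irrefl hxy).elim
    case inr.inl.inr => have := hleaf v hv y hy hxy hvy; tauto
    case inr.inr.inl => have := hleaf v hv x hx hxy.symm hvx; tauto
    case inr.inr.inr =>
      have := h.separates v hv x hx y hy hxy hvx hvy
      rw [h₁ v hv, h₁ x hx, h₁ y hy, h₂ v hv, h₂ x hx, h₂ y hy]
      omega
    all_goals contradiction

theorem exists_isLeafLayout (hG : G.IsAcyclic) (s : Finset V) :
    ∃ g₁ g₂, IsLeafLayout G s g₁ g₂ := by
  classical
  induction s using leaf_induction_of_isAcyclic hG with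
  | empty => exact ⟨0, 0, by simp, by simp⟩
  | insert s l hl p hp ih =>
    obtain ⟨g₁, g₂, h⟩ := ih
    exact ⟨_, _, h.insert hl hp⟩

theorem IsLeafLayout.separatesEdges [Fintype V] {g₁ g₂ : V → ℕ}
    (h : IsLeafLayout G Finset.univ g₁ g₂) : SeparatesEdges G ![g₁, g₂] := by
  intro e he f hf hef
  induction e with | _ a b
  induction f with | _ x y
  obtain ⟨⟨hax, hbx⟩, hay, hby⟩ : (a ≠ x ∧ b ≠ x) ∧ a ≠ y ∧ b ≠ y := by
    simpa [eq_comm] using hef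
  have ha := h.separates a (by simp) x (by simp) y (by simp) hf hax hay
  have hb := h.separates b (by simp) x (by simp) y (by simp) hf hbx hby
  have hx := h.separates x (by simp) a (by simp) b (by simp) he hax.symm hbx.symm
  have hy := h.separates y (by simp) a (by simp) b (by simp) he hay.symm hby.symm
  suffices Separates g₁ {a, b} {x, y} ∨ Separates g₂ {a, b} {x, y} by
    simpa [Fin.exists_fin_two] using this
  simp only [separates_pair]
  -- Let `b` be the highest endpoint in `g₂`. Then `x` and `y` lie outside the `g₁`-interval from
  -- `a` to `b`. If `a` lies outside that from `x` to `y` as well, `g₁` separates; otherwise `a`,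
  -- and with it `b`, is above `x` and `y` in `g₂`.
  omega

theorem sepDim_le_two_of_isAcyclic [Fintype V] (hG : G.IsAcyclic) : sepDim G ≤ 2 := by
  obtain ⟨g₁, g₂, h⟩ := exists_isLeafLayout hG Finset.univ
  simpa using h.separatesEdges.sepDim_le_card

end Forest

section StarForest

variable {V : Type*} {G : SimpleGraph V}

theorem IsStarForest.eq_of_adj {a b c d : V} (hG : IsStarForest G) (hab : G.Adj a b)
    (hbc : G.Adj b c) (hcd : G.Adj c d) (hac : a ≠ c) : b = d := by
  by_contra hbd
  exact hG ⟨a, b, c, d, hab, hbc, hcd, hac, hbd⟩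

theorem IsStarForest.adj_of_reachable {a b x : V} (hG : IsStarForest G) (hab : G.Adj a b)
    (h : G.Reachable a x) : G.Adj a x ∨ G.Adj b x := by
  rw [SimpleGraph.reachable_iff_reflTransGen] at h
  induction h with
  | refl => exact .inr hab.symm
  | @tail u w _ huw ih =>
    obtain hau | hbu := ih
    · by_cases hwa : w = a
      · exact .inr (hwa ▸ hab.symm)
      · exact .inr (hG.eq_of_adj huw.symm hau.symm hab hwa ▸ huw)
    · by_cases hwb : w = b
      · exact .inl (hwb ▸ hab)
      · exact .inl (hG.eq_of_adj huw.symm hbu.symm hab.symm hwb ▸ huw)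

theorem IsStarForest.not_reachable {a b x y : V} (hG : IsStarForest G) (hab : G.Adj a b)
    (hxy : G.Adj x y) (hax : a ≠ x) (hay : a ≠ y) (hbx : b ≠ x) (hby : b ≠ y) :
    ¬ G.Reachable a x := fun h => by
  obtain hax' | hbx' := hG.adj_of_reachable hab h
  · exact hbx (hG.eq_of_adj hxy.symm hax'.symm hab hay.symm).symm
  · exact hax (hG.eq_of_adj hxy.symm hbx'.symm hab.symm hby.symm).symm

theorem IsStarForest.sepDim_le_one [Fintype V] (hG : IsStarForest G) : sepDim G ≤ 1 := by
  obtain ⟨n, hn⟩ := Countable.exists_injective_nat G.ConnectedComponent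
  refine sepDim_le_iff.2 ⟨fun _ v => n (G.connectedComponentMk v), fun e he f hf hef => ⟨0, ?_⟩⟩
  induction e with | _ a b
  induction f with | _ x y
  obtain ⟨⟨hax, hbx⟩, hay, hby⟩ : (a ≠ x ∧ b ≠ x) ∧ a ≠ y ∧ b ≠ y := by
    simpa [eq_comm] using hef
  have hne : n (G.connectedComponentMk a) ≠ n (G.connectedComponentMk x) := fun h =>
    hG.not_reachable he hf hax hay hbx hby (SimpleGraph.ConnectedComponent.exact (hn h))
  have hb := SimpleGraph.ConnectedComponent.connectedComponentMk_eq_of_adj he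
  have hy := SimpleGraph.ConnectedComponent.connectedComponentMk_eq_of_adj hf
  simpa [separates_pair, ← hb, ← hy] using lt_or_gt_of_ne hne

end StarForest

theorem stmt12_general {V : Type*} [Fintype V] (G : SimpleGraph V) (ka ks : ℕ)
    (ha : ∃ c : V → Fin ka, ∀ i j : Fin ka, (G.induce {v : V | c v = i ∨ c v = j}).IsAcyclic)
    (hs : ∃ c : V → Fin ks, ∀ i j : Fin ks, IsStarForest (G.induce {v : V | c v = i ∨ c v = j})) :
    (sepDim G : ℝ) ≤ 2 * ka + 13.68 * Real.logb 2 ka ∧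
    (sepDim G : ℝ) ≤ ks + 13.68 * Real.logb 2 ks := by
  obtain ⟨c, hc⟩ := ha
  obtain ⟨d, hd⟩ := hs
  constructor
  · simpa using sepDim_le_mul_add_logb c fun i j => sepDim_le_two_of_isAcyclic (hc i j)
  · simpa using sepDim_le_mul_add_logb d fun i j => (hd i j).sepDim_le_one

/-- If `G` has an acyclic colouring with `ka` colours then
`π(G) ≤ 2·ka + 13.68·log₂ ka`, and if `G` has a star colouring with `ks`
colours then `π(G) ≤ ks + 13.68·log₂ ks`. -/
theorem stmt12 {V : Type*} [Fintype V] [DecidableEq V] (G : SimpleGraph V)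
    (ka ks : ℕ)
    (ha : ∃ c : V → Fin ka, (∀ u v, G.Adj u v → c u ≠ c v) ∧
      ∀ i j : Fin ka, (G.induce {v : V | c v = i ∨ c v = j}).IsAcyclic)
    (hs : ∃ c : V → Fin ks, (∀ u v, G.Adj u v → c u ≠ c v) ∧
      ∀ i j : Fin ks, IsStarForest (G.induce {v : V | c v = i ∨ c v = j})) :
    (sepDim G : ℝ) ≤ 2 * ka + 13.68 * Real.logb 2 ka ∧
    (sepDim G : ℝ) ≤ ks + 13.68 * Real.logb 2 ks :=
  stmt12_general G ka ks (ha.imp fun _ h => h.2) (hs.imp fun _ h => h.2)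
end
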